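/- Let v be a word, w = a_1…a_k a word, and f ∈ NSym_A. Then 𝔹_v(f)·H_w = Σ_{0≤j≤k} 𝔹_{v·(a_{j+1}⋯a_k)}(f·H_{a_1⋯a_j}), where H_{a_1⋯a_0} is interpreted as 1. -/

import Mathlib

open scoped BigOperators

namespace ColoredImm

variable {A : Type*}

/-- A *weak sentence* over the alphabet `A`: a finite list of words (words may be empty). -/
abbrev Sentence (A : Type*) := List (List A)

/-- A genuine *sentence*: all of its words are nonempty. -/
def IsSentence (I : Sentence A) : Prop := ∀ w ∈ I, w ≠ []

/-- The size `|I|` of a sentence: its total number of letters. -/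
def size (I : Sentence A) : ℕ := (I.map List.length).sum

/-- The word lengths `wℓ(I)` of a sentence. -/
def wl (I : Sentence A) : List ℕ := I.map List.length

/-- The flattening of a weak sentence: delete all empty words. -/
def flattenWS (I : Sentence A) : Sentence A := I.filter (fun w => !w.isEmpty)

/-- `Refines J I` means `J ⪯ I`: the sentence `I` can be obtained by concatenating
some adjacent words of `J` (so `J` is a refinement of `I`, and `I` a coarsening of `J`). -/
def Refines (J I : Sentence A) : Prop :=
  ∃ P : List (Sentence A), (∀ p ∈ P, p ≠ []) ∧ P.flatten = J ∧ P.map List.flatten = I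

/-! ### Fillings and colored immaculate tableaux -/

/-- An integer filling of a diagram, recorded row by row. -/
abbrev Filling := List (List ℕ)

/-- The entry of a filling at box `b = (row, column)` (0-indexed), with default `0`. -/
def entryAt (f : Filling) (b : ℕ × ℕ) : ℕ := (f.getD b.1 []).getD b.2 0

/-- `IsCIT I f`: `f` is a colored immaculate tableau of shape `I`; that is, `f` has the
same shape as the colored composition diagram of `I`, its entries are positive integers
weakly increasing left to right along each row, and the entries in the first column are
strictly increasing from top to bottom. -/
def IsCIT (I : Sentence A) (f : Filling) : Prop :=
  f.map List.length = I.map List.length ∧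
  (∀ row ∈ f, row.Chain' (· ≤ ·)) ∧
  (f.filterMap List.head?).Chain' (· < ·) ∧
  (∀ x ∈ f.flatten, 1 ≤ x)

/-- The colors (letters of `w`) of the boxes of one row whose entry (in `row`) is `v`,
read from left to right. -/
def rowWith (w : List A) (row : List ℕ) (v : ℕ) : List A :=
  ((w.zip row).filter (fun p => p.2 == v)).map Prod.fst

/-- The word of the type of a tableau at value `v`: the colors of all boxes with entry `v`,
read left to right, from the bottom row up to the top row. -/
def typeWord (I : Sentence A) (f : Filling) (v : ℕ) : List A :=
  (((I.zip f).reverse).map (fun p => rowWith p.1 p.2 v)).flatten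

/-- `HasType I f B` : the tableau `f` (of shape `I`) has type the weak sentence `B`,
i.e. for every positive integer `v`, the colors of the boxes of `f` containing `v`
(read left to right, bottom to top) form the `v`-th word of `B`. -/
def HasType (I : Sentence A) (f : Filling) (B : Sentence A) : Prop :=
  ∀ v, 1 ≤ v → typeWord I f v = B.getD (v - 1) []

/-- `K_{J,B}`: the number of colored immaculate tableaux of shape `J` and type `B`. -/
noncomputable def KJB (J B : Sentence A) : ℕ :=
  Set.ncard {f : Filling | IsCIT J f ∧ HasType J f B}

/-! ### Standardization -/

/-- The list of boxes of a filling. -/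
def boxes (f : Filling) : List (ℕ × ℕ) :=
  ((List.range f.length).map
    (fun r => (List.range (f.getD r []).length).map (fun j => (r, j)))).flatten

/-- `beforeB f b b'`: box `b` comes strictly before box `b'` in the type-reading order of `f`
(smaller entries first; among equal entries, lower rows first, and within a row left to right). -/
def beforeB (f : Filling) (b b' : ℕ × ℕ) : Bool :=
  entryAt f b < entryAt f b' ||
    (entryAt f b == entryAt f b' && (b'.1 < b.1 || (b.1 == b'.1 && b.2 < b'.2)))

/-- The standardization of a filling: each box is renumbered (starting from `1`)
according to its position in the type-reading order. -/
def stdFill (f : Filling) : Filling :=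
  (List.range f.length).map (fun r =>
    (List.range (f.getD r []).length).map (fun j =>
      1 + ((boxes f).filter (fun b' => beforeB f b' (r, j))).length))

/-- The number of boxes of a filling. -/
def nBoxes (f : Filling) : ℕ := f.flatten.length

/-- A filling of `n` boxes is standard when its entries are exactly `1, …, n`,
each appearing once. -/
def IsStandardF (f : Filling) : Prop := f.flatten.Perm (List.range' 1 (nBoxes f))

/-! ### Descents and the colored descent composition -/

/-- The (0-indexed) row containing the value `v` in a standard filling. -/
def rowOf (f : Filling) (v : ℕ) : ℕ := f.findIdx (fun row => row.contains v)

/-- The sorted list of descents of a standard filling: those `i` with `1 ≤ i ≤ n-1`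
such that `i+1` lies in a strictly lower row than `i`. -/
def descList (f : Filling) : List ℕ :=
  (List.range' 1 (nBoxes f - 1)).filter (fun i => decide (rowOf f i < rowOf f (i + 1)))

/-- The composition of `n` associated to a set of split positions `d_1 < … < d_k`:
`(d_1, d_2 - d_1, …, n - d_k)`. -/
def compOf (ds : List ℕ) (n : ℕ) : List ℕ :=
  List.zipWith (fun a b => b - a) (0 :: ds) (ds ++ [n])

/-- Split a word into a sentence according to a composition. -/
def splitByComp : List A → List ℕ → List (List A)
  | _, [] => []
  | w, a :: rest => w.take a :: splitByComp (w.drop a) rest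

/-- The color of the box containing the value `v` in a standard filling of shape `I`. -/
def colorOf [Inhabited A] (I : Sentence A) (f : Filling) (v : ℕ) : A :=
  (I.getD (rowOf f v) []).getD ((f.getD (rowOf f v) []).findIdx (fun x => x == v)) default

/-- The maximal word of the colored descent composition of a standard filling of shape `I`:
the colors of its boxes read in the order of their integer entries. -/
def readWord [Inhabited A] (I : Sentence A) (f : Filling) : List A :=
  (List.range (nBoxes f)).map (fun i => colorOf I f (i + 1))

/-- The colored descent composition `co_A(U)` of a standard colored immaculate tableau:
read the colors of the boxes in the order of their entries, starting a new word
immediately after each descent. -/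
def coA [Inhabited A] (I : Sentence A) (f : Filling) : Sentence A :=
  if nBoxes f = 0 then [] else splitByComp (readWord I f) (compOf (descList f) (nBoxes f))

/-- `L_{J,C}`: the number of standard colored immaculate tableaux of shape `J`
with colored descent composition `C`. -/
noncomputable def LJC [Inhabited A] (J C : Sentence A) : ℕ :=
  Set.ncard {f : Filling | IsCIT J f ∧ IsStandardF f ∧ coA J f = C}

/-! ### The colored quasisymmetric functions `QSym_A` -/

/-- A (normal form of a) monomial in the partially commutative variables `x_{a,i}`:
a pair consisting of the list of words `(w_1, …, w_m)` and the list of (strictly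
increasing, positive) second indices `(j_1 < … < j_m)`, representing
`x_{w_1,j_1} ⋯ x_{w_m,j_m}`. -/
abbrev Mono (A : Type*) := List (List A) × List ℕ

/-- A colored quasisymmetric "series": a formal linear combination of monomials,
recorded by its coefficient function.  `QSym_A` itself is the span of the colored
monomial functions `MQ I` inside this space. -/
abbrev QSymA (A : Type*) := Mono A → ℚ

/-- Validity of a monomial normal form: words and indices match up, the indices are
strictly increasing positive integers, and all words are nonempty. -/
def ValidMono (m : Mono A) : Prop :=
  m.1.length = m.2.length ∧ m.2.Chain' (· < ·) ∧ (∀ j ∈ m.2, 1 ≤ j) ∧ ∀ w ∈ m.1, w ≠ []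

open Classical in
/-- The colored monomial quasisymmetric function `M_I`: the sum of all monomials
`x_{w_1,j_1} ⋯ x_{w_m,j_m}` with `j_1 < … < j_m`, where `I = (w_1, …, w_m)`. -/
noncomputable def MQ (I : Sentence A) : QSymA A := fun m =>
  if m.1 = I ∧ ValidMono m then 1 else 0

/-- The largest entry of a filling. -/
def maxEntry (f : Filling) : ℕ := f.flatten.foldr max 0

/-- The monomial `x_T` of a colored immaculate tableau `T = f` of shape `I`:
for `T` of type `B = (u_1, …, u_j)` it is `x_{u_1,1} x_{u_2,2} ⋯ x_{u_j,j}`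
(empty words are skipped). -/
def monoOf (I : Sentence A) (f : Filling) : Mono A :=
  let vs := ((List.range (maxEntry f)).map (· + 1)).filter (fun v => !(typeWord I f v).isEmpty)
  (vs.map (typeWord I f), vs)

/-- The colored dual immaculate function `𝔖*_J = Σ_T x_T`, the sum of the monomials of all
colored immaculate tableaux `T` of shape `J` (its coefficient at a monomial `m` is the
number of such tableaux with `x_T = m`). -/
noncomputable def dualImm (J : Sentence A) : QSymA A := fun m =>
  (Set.ncard {f : Filling | IsCIT J f ∧ monoOf J f = m} : ℚ)

/-- The colored fundamental quasisymmetric function `F_I = Σ_{J ⪯ I} M_J`. -/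
noncomputable def FQ (I : Sentence A) : QSymA A :=
  ∑ᶠ J ∈ {J : Sentence A | Refines J I}, MQ J

/-! ### The colored immaculate descent graph -/

/-- Edges of the colored immaculate descent graph: a directed edge from `I` to `J` (`J ≠ I`)
whenever some standard colored immaculate tableau of shape `I` has colored descent
composition `J`. -/
def IsEdge [Inhabited A] (I J : Sentence A) : Prop := J ≠ I ∧ LJC I J ≠ 0

/-- Directed paths from `I` to `K` in the colored immaculate descent graph, recorded by
their (nonempty) lists of successive vertices; the path `[I]` is the empty path at `I`. -/
def PathsFromTo [Inhabited A] (I K : Sentence A) : Set (List (Sentence A)) :=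
  {p | p.head? = some I ∧ p.getLast? = some K ∧ p.Chain' IsEdge}

/-- The signed weight `(-1)^{ℓ(𝒫)} prod(𝒫)` of a directed path `𝒫`:
`ℓ(𝒫)` is its number of edges and `prod(𝒫)` the product of its edge weights `L_{I,J}`. -/
noncomputable def pathWeight [Inhabited A] (p : List (Sentence A)) : ℚ :=
  ((-1 : ℚ)) ^ (p.length - 1) * ((p.zip p.tail).map (fun e => (LJC e.1 e.2 : ℚ))).prod

/-- `L⁻¹_{I,K} = Σ_𝒫 (-1)^{ℓ(𝒫)} prod(𝒫)`, summed over all directed paths `𝒫`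
from `I` to `K` in the colored immaculate descent graph. -/
noncomputable def Linv [Inhabited A] (I K : Sentence A) : ℚ :=
  ∑ᶠ p ∈ PathsFromTo I K, pathWeight p

/-! ### The colored noncommutative symmetric functions `NSym_A` -/

/-- A formal series over the complete homogeneous basis `{H_I}` of `NSym_A`, recorded by its
coefficient function on (weak) sentences.  `NSym_A` itself consists of the finitely
supported elements supported on genuine sentences; see `InNSym`. -/
abbrev NSymA (A : Type*) := Sentence A → ℚ

/-- Membership in `NSym_A` proper: finitely supported, and supported on genuine sentences. -/
def InNSym (f : NSymA A) : Prop :=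
  (Function.support f).Finite ∧ ∀ I, f I ≠ 0 → IsSentence I

open Classical in
/-- The colored complete homogeneous noncommutative symmetric function
`H_I = H_{w_1} ⋯ H_{w_k}`. -/
noncomputable def Hd (I : Sentence A) : NSymA A := fun J => if J = I then 1 else 0

/-- `H_w` for a single word `w`, with `H_∅ = 1`. -/
noncomputable def Hw (w : List A) : NSymA A := if w.isEmpty then Hd [] else Hd [w]

/-- Multiplication in `NSym_A` (the concatenation product, extended to series):
`H_I · H_J = H_{I ⬝ J}`. -/
def mulN (f g : NSymA A) : NSymA A := fun I =>
  ∑ j ∈ Finset.range (I.length + 1), f (I.take j) * g (I.drop j)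

/-- The duality pairing `⟨·,·⟩ : NSym_A × QSym_A → ℚ`, determined by
`⟨H_I, M_J⟩ = δ_{I,J}`: the `M_I`-coefficient of a quasisymmetric function is its
coefficient on the monomial `x_{w_1,1} x_{w_2,2} ⋯ x_{w_k,k}`. -/
noncomputable def pairNQ (G : NSymA A) (F : QSymA A) : ℚ :=
  ∑ᶠ I ∈ {I : Sentence A | IsSentence I}, G I * F (I, List.range' 1 I.length)

/-- All ways of splitting each word of a list of words into a prefix and a suffix. -/
def splitsOf : List (List A) → List (List (List A) × List (List A))
  | [] => [([], [])]
  | w :: ws =>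
      (((splitsOf ws).map (fun p =>
        (List.range (w.length + 1)).map (fun t => (w.take t :: p.1, w.drop t :: p.2))))).flatten

/-- Restriction of a candidate monomial: keep only the nonempty words together with
their indices. -/
def restrictMono (ws : List (List A)) (js : List ℕ) : Mono A :=
  let ps := (ws.zip js).filter (fun p => !p.1.isEmpty)
  (ps.map Prod.fst, ps.map Prod.snd)

/-- The product of colored quasisymmetric series: the coefficient of a monomial in `F·G`
is the sum, over all ways of writing each of its words as a concatenation of a word of a
monomial of `F` (on the left) and a word of a monomial of `G` (on the right), of the
products of the corresponding coefficients. -/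
def mulQ (F G : QSymA A) : QSymA A := fun m =>
  ((splitsOf m.1).map (fun p => F (restrictMono p.1 m.2) * G (restrictMono p.2 m.2))).sum

/-- The right perp operator `M^⊸` of `M ∈ QSym_A`, the linear operator on `NSym_A`
determined by `⟨M^⊸(H), G⟩ = ⟨H, G·M⟩`; explicitly, for the dual bases `{M_I}` and `{H_I}`,
`M^⊸(H) = Σ_I ⟨H, M_I · M⟩ H_I`. -/
noncomputable def rperp (M : QSymA A) (H : NSymA A) : NSymA A :=
  ∑ᶠ I ∈ {I : Sentence A | IsSentence I}, pairNQ H (mulQ (MQ I) M) • Hd I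

/-- The colored noncommutative Bernstein operator
`𝔹_v = Σ_u Σ_{Q : w(Q^r) = u} (-1)^{ℓ(Q)} H_{v·u} · (Σ_{S ⪰ Q} M_S^⊸)`,
where `Q` runs over all sentences, `u = w(Q^r)` is the concatenation of the words of `Q`
in reverse order, and `S` runs over all coarsenings of `Q`. -/
noncomputable def Bern (v : List A) (f : NSymA A) : NSymA A :=
  ∑ᶠ Q ∈ {Q : Sentence A | IsSentence Q},
    ((-1 : ℚ)) ^ Q.length •
      mulN (Hw (v ++ Q.reverse.flatten))
        (∑ᶠ S ∈ {S : Sentence A | Refines Q S}, rperp (MQ S) f)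

/-- The colored immaculate function `𝔖_J = 𝔹_{v_1} 𝔹_{v_2} ⋯ 𝔹_{v_h}(1)`. -/
noncomputable def ImmS (J : Sentence A) : NSymA A := J.foldr Bern (Hd [])

/-- The colored ribbon function `R_I = Σ_{J ⪰ I} (-1)^{ℓ(J) - ℓ(I)} H_J`. -/
noncomputable def Rib (I : Sentence A) : NSymA A :=
  ∑ᶠ J ∈ {J : Sentence A | Refines I J}, ((-1 : ℚ)) ^ (I.length - J.length) • Hd J

/-- The Pieri relation `J ⊂_w K` for a sentence `J = (v_1, …, v_h)` and a word `w`: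
`K = (u_1, …, u_g)` with `h ≤ g ≤ h+1` (setting `v_{h+1} = ∅`) and `u_j = v_j · q_j`
for words `q_j` (possibly empty) whose reversed concatenation `q_g ⋯ q_1` equals `w`. -/
def PieriRel (J : Sentence A) (w : List A) (K : Sentence A) : Prop :=
  J.length ≤ K.length ∧ K.length ≤ J.length + 1 ∧
  ∃ q : List (List A), q.length = K.length ∧ q.reverse.flatten = w ∧
    ∀ j < K.length, K.getD j [] = J.getD j [] ++ q.getD j []

/-- Right containment of a weak sentence `K` in `J`: same length, and each word of `K` is a
suffix of the corresponding word of `J`. -/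
def RightContained (K J : Sentence A) : Prop :=
  K.length = J.length ∧ ∀ i < J.length, (K.getD i []).IsSuffix (J.getD i [])

/-- The weak sentence `J/_R K`: remove each word of `K` from the right end of the
corresponding word of `J`. -/
def rightQuot (J K : Sentence A) : Sentence A :=
  List.zipWith (fun v u => v.take (v.length - u.length)) J K

/-- Left containment `J ⊆_L I`: `ℓ(J) ≤ ℓ(I)` and each word of `J` is a prefix of the
corresponding word of `I`. -/
def LeftContained (J I : Sentence A) : Prop :=
  J.length ≤ I.length ∧ ∀ i < J.length, (J.getD i []).IsPrefix (I.getD i [])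

/-- A skew colored immaculate tableau of shape `I/J`: a filling of the active boxes
(the `i`-th row keeps the last `|w_i| - |v_i|` boxes) with positive integers, rows weakly
increasing left to right, and the entries in the (active part of the) first column of `I`
strictly increasing top to bottom. -/
def IsSkewCIT (I J : Sentence A) (f : Filling) : Prop :=
  f.map List.length =
    (List.range I.length).map (fun i => (I.getD i []).length - (J.getD i []).length) ∧
  (∀ row ∈ f, row.Chain' (· ≤ ·)) ∧
  ((List.range I.length).filterMap
    (fun i => if (J.getD i []).length = 0 then (f.getD i []).head? else none)).Chain' (· < ·) ∧
  (∀ x ∈ f.flatten, 1 ≤ x)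

/-- The word of the type of a skew tableau at value `v`: the colors of the active boxes with
entry `v`, read left to right, bottom to top. -/
def skewTypeWord (I J : Sentence A) (f : Filling) (v : ℕ) : List A :=
  (((List.range I.length).reverse).map (fun i =>
    rowWith ((I.getD i []).drop (J.getD i []).length) (f.getD i []) v)).flatten

/-- `SkewHasType I J f K` : the skew tableau `f` of shape `I/J` has type `K`. -/
def SkewHasType (I J : Sentence A) (f : Filling) (K : Sentence A) : Prop :=
  ∀ v, 1 ≤ v → skewTypeWord I J f v = K.getD (v - 1) []

/-! ### The complement involution `ψ` and the row-strict functions -/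

/-- The complement `I^c` of a sentence: the unique sentence with the same maximal word
that splits exactly where `I` does not. -/
def complSent (I : Sentence A) : Sentence A :=
  let w := I.flatten
  let n := w.length
  if n = 0 then []
  else
    let splits := (((wl I).scanl (· + ·) 0).drop 1).dropLast
    let csplits := (List.range' 1 (n - 1)).filter (fun i => !(splits.contains i))
    splitByComp w (compOf csplits n)

/-- The `M_I`-coefficient of a colored quasisymmetric function. -/
noncomputable def coeffM (G : QSymA A) (I : Sentence A) : ℚ := G (I, List.range' 1 I.length)

/-- The image of `M_I` under `ψ`, via `M_I = Σ_{J ⪯ I} (-1)^{ℓ(J)-ℓ(I)} F_J` and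
`ψ(F_J) = F_{J^c}`. -/
noncomputable def psiM (I : Sentence A) : QSymA A :=
  ∑ᶠ J ∈ {J : Sentence A | Refines J I}, ((-1 : ℚ)) ^ (J.length - I.length) • FQ (complSent J)

/-- The linear involution `ψ` of `QSym_A`, determined by `ψ(F_I) = F_{I^c}`. -/
noncomputable def psiQ (G : QSymA A) : QSymA A :=
  ∑ᶠ I ∈ {I : Sentence A | IsSentence I}, coeffM G I • psiM I

/-- A colored row-strict immaculate tableau of shape `I`: entries strictly increase left to
right along each row and weakly increase top to bottom down the first column. -/
def IsCRSIT (I : Sentence A) (f : Filling) : Prop :=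
  f.map List.length = I.map List.length ∧
  (∀ row ∈ f, row.Chain' (· < ·)) ∧
  (f.filterMap List.head?).Chain' (· ≤ ·) ∧
  (∀ x ∈ f.flatten, 1 ≤ x)

/-- The word of the type of a row-strict tableau at value `v`: the colors of the boxes with
entry `v`, read left to right, top to bottom. -/
def rsTypeWord (I : Sentence A) (f : Filling) (v : ℕ) : List A :=
  ((I.zip f).map (fun p => rowWith p.1 p.2 v)).flatten

/-- The monomial `x_T` of a colored row-strict immaculate tableau. -/
def rsMonoOf (I : Sentence A) (f : Filling) : Mono A :=
  let vs := ((List.range (maxEntry f)).map (· + 1)).filter (fun v => !(rsTypeWord I f v).isEmpty)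
  (vs.map (rsTypeWord I f), vs)

/-- The colored row-strict dual immaculate function `ℛ𝔖*_J = Σ_T x_T`, summed over all
colored row-strict immaculate tableaux `T` of shape `J`. -/
noncomputable def rsDualImm (J : Sentence A) : QSymA A := fun m =>
  (Set.ncard {f : Filling | IsCRSIT J f ∧ rsMonoOf J f = m} : ℚ)

/-- `α ⪰ β` in the reverse lexicographic order on compositions: at the first index where
they differ, `α` has the *smaller* entry (padding with zeros). -/
def RevLexGE (α β : List ℕ) : Prop :=
  α = β ∨ ∃ i, (∀ j < i, α.getD j 0 = β.getD j 0) ∧ α.getD i 0 < β.getD i 0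

/-! ### Uncolored (ordinary) versions, for `QSym` -/

namespace Uncolored

/-- A composition: a list of positive integers. -/
def IsComposition (α : List ℕ) : Prop := ∀ a ∈ α, 1 ≤ a

/-- `β ⪯ α`: the composition `α` is obtained by summing adjacent parts of `β`. -/
def RefinesC (β α : List ℕ) : Prop :=
  ∃ P : List (List ℕ), (∀ p ∈ P, p ≠ []) ∧ P.flatten = β ∧ P.map List.sum = α

/-- A monomial `x_{i_1}^{a_1} ⋯ x_{i_m}^{a_m}` recorded by its exponents and its
strictly increasing positive indices. -/
abbrev MonoU := List ℕ × List ℕ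

/-- A quasisymmetric "series", recorded by its coefficient function on monomials.
`QSym` is the span of the monomial functions `MU α` inside this space. -/
abbrev QSymU := MonoU → ℚ

/-- Validity of a monomial: matching lengths, strictly increasing positive indices,
positive exponents. -/
def ValidMonoU (m : MonoU) : Prop :=
  m.1.length = m.2.length ∧ m.2.Chain' (· < ·) ∧ (∀ j ∈ m.2, 1 ≤ j) ∧ ∀ a ∈ m.1, 1 ≤ a

open Classical in
/-- The monomial quasisymmetric function `M_α`. -/
noncomputable def MU (α : List ℕ) : QSymU := fun m =>
  if m.1 = α ∧ ValidMonoU m then 1 else 0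

/-- The fundamental quasisymmetric function `F_α = Σ_{β ⪯ α} M_β`. -/
noncomputable def FU (α : List ℕ) : QSymU :=
  ∑ᶠ β ∈ {β : List ℕ | RefinesC β α}, MU β

/-- An immaculate tableau of shape `α`: positive integer entries, rows weakly increasing
left to right, first column strictly increasing top to bottom. -/
def IsIT (α : List ℕ) (f : Filling) : Prop :=
  f.map List.length = α ∧
  (∀ row ∈ f, row.Chain' (· ≤ ·)) ∧
  (f.filterMap List.head?).Chain' (· < ·) ∧
  (∀ x ∈ f.flatten, 1 ≤ x)

/-- The number of boxes of `f` with entry `v`. -/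
def countOf (f : Filling) (v : ℕ) : ℕ := (f.flatten.filter (fun x => x == v)).length

/-- The monomial `x^T` of an immaculate tableau `T` of type `β`:
`x_1^{β_1} ⋯ x_h^{β_h}` (zero exponents skipped). -/
def monoOfU (f : Filling) : MonoU :=
  let vs := ((List.range (maxEntry f)).map (· + 1)).filter (fun v => decide (countOf f v ≠ 0))
  (vs.map (countOf f), vs)

/-- The dual immaculate function `𝔖*_α = Σ_T x^T`, summed over all immaculate tableaux
of shape `α`. -/
noncomputable def dualImmU (α : List ℕ) : QSymU := fun m =>
  (Set.ncard {f : Filling | IsIT α f ∧ monoOfU f = m} : ℚ)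

/-- The descent composition `co(U)` of a standard immaculate tableau. -/
def descComp (f : Filling) : List ℕ :=
  if nBoxes f = 0 then [] else compOf (descList f) (nBoxes f)

/-- `L_{α,β}`: the number of standard immaculate tableaux of shape `α` with descent
composition `β`. -/
noncomputable def LU (α β : List ℕ) : ℕ :=
  Set.ncard {f : Filling | IsIT α f ∧ IsStandardF f ∧ descComp f = β}

/-- Edges of the immaculate descent graph `𝔇^n`. -/
def IsEdgeU (α β : List ℕ) : Prop := β ≠ α ∧ LU α β ≠ 0

/-- Directed paths from `α` to `β` in the immaculate descent graph, recorded by their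
lists of successive vertices; `[α]` is the empty path at `α`. -/
def PathsU (α β : List ℕ) : Set (List (List ℕ)) :=
  {p | p.head? = some α ∧ p.getLast? = some β ∧ p.Chain' IsEdgeU}

/-- The signed weight `(-1)^{ℓ(𝒫)} prod(𝒫)` of a path. -/
noncomputable def pathWeightU (p : List (List ℕ)) : ℚ :=
  ((-1 : ℚ)) ^ (p.length - 1) * ((p.zip p.tail).map (fun e => (LU e.1 e.2 : ℚ))).prod

/-- `L⁻¹_{α,β} = Σ_𝒫 (-1)^{ℓ(𝒫)} prod(𝒫)`, over directed paths from `α` to `β` in `𝔇^n`. -/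
noncomputable def LinvU (α β : List ℕ) : ℚ :=
  ∑ᶠ p ∈ PathsU α β, pathWeightU p

end Uncolored

end ColoredImm

namespace ColoredImm

/-!
Let `Δ` be the coproduct of `NSym_A` dual to the product of `QSym_A`. Since `Δ` is adjoint to that
product, `M_S^⊸` picks out of `Δ f` the terms `H_I ⊗ H_S`, so if `Δ f = Σ c_{I,S} H_I ⊗ H_S` then
`𝔹_v(f) = Σ c_{I,S} X(v, S) H_I` with `X(v, S) = Σ_{Q ⪯ S} (-1)^{ℓ(Q)} H_{v·w(Q^r)}`.

Multiplicativity of `Δ` expands `𝔹_{v·w_{>j}}(f·H_{w_{≤j}})` into the terms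
`c_{I,S} X(v·w_{>j}, S·w_{(t,j]}) H_{I·w_{≤t}}` for `t ≤ j`. Fix `t` and put `y = w_{>t}`. If
`y ≠ ∅`, sorting the refinements of `S·y` by their last word, a nonempty suffix of `y`, gives
`X(v, S·y) = -Σ_{i<|y|} X(v·y_{>i}, S·y_{≤i})`, so the sum over `j` vanishes. Only `t = j = |w|`
survives, and its terms add up to `𝔹_v(f)·H_w`.
-/

section FiniteSums

variable {ι κ M : Type*} [AddCommMonoid M]

lemma finsum_sum_ite_mem (s : Finset κ) {t : κ → Set ι} [∀ i k, Decidable (i ∈ t k)]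
    (ht : ∀ k ∈ s, (t k).Finite) (F : ι → κ → M) :
    ∑ᶠ i, ∑ k ∈ s, (if i ∈ t k then F i k else 0) = ∑ k ∈ s, ∑ᶠ i ∈ t k, F i k := by
  rw [finsum_sum_comm]
  · refine Finset.sum_congr rfl fun k _ ↦ finsum_congr fun i ↦ ?_
    rw [finsum_eq_if]
  · exact fun k hk ↦ (ht k hk).subset fun i hi ↦ by_contra fun h ↦ hi (if_neg h)

lemma sum_range_sum_range_comm (n : ℕ) (F : ℕ → ℕ → M) :
    ∑ j ∈ Finset.range (n + 1), ∑ t ∈ Finset.range (j + 1), F j t =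
      ∑ t ∈ Finset.range (n + 1), ∑ j ∈ Finset.range (n - t + 1), F (t + j) t := by
  rw [Finset.sum_comm' (t' := Finset.range (n + 1)) (s' := fun t ↦ Finset.Ico t (n + 1))
    (by simp only [Finset.mem_range, Finset.mem_Ico]; lia)]
  refine Finset.sum_congr rfl fun t ht ↦ ?_
  rw [Finset.sum_Ico_eq_sum_range, Nat.sub_add_comm (Finset.mem_range_succ_iff.1 ht)]

end FiniteSums

section Product

variable {A : Type*}

lemma mulN_add_left (f g h : NSymA A) : mulN (f + g) h = mulN f h + mulN g h := by
  funext I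
  simp [mulN, add_mul, Finset.sum_add_distrib]

lemma mulN_add_right (f g h : NSymA A) : mulN f (g + h) = mulN f g + mulN f h := by
  funext I
  simp [mulN, mul_add, Finset.sum_add_distrib]

lemma mulN_smul_left (c : ℚ) (f g : NSymA A) : mulN (c • f) g = c • mulN f g := by
  funext I
  simp [mulN, Finset.mul_sum, mul_assoc]

lemma mulN_smul_right (c : ℚ) (f g : NSymA A) : mulN f (c • g) = c • mulN f g := by
  funext I
  simp [mulN, Finset.mul_sum, mul_left_comm]

/-- The product of `NSym_A` as a bilinear map, for moving `mulN` across finite sums. -/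
noncomputable def mulNₗ : NSymA A →ₗ[ℚ] NSymA A →ₗ[ℚ] NSymA A :=
  LinearMap.mk₂ ℚ mulN mulN_add_left mulN_smul_left mulN_add_right mulN_smul_right

lemma mulN_zero (f : NSymA A) : mulN f 0 = 0 := map_zero (mulNₗ f)

lemma zero_mulN (f : NSymA A) : mulN 0 f = 0 := map_zero (mulNₗ.flip f)

lemma mulN_sum {κ : Type*} (f : NSymA A) (s : Finset κ) (g : κ → NSymA A) :
    mulN f (∑ k ∈ s, g k) = ∑ k ∈ s, mulN f (g k) :=
  map_sum (mulNₗ f) g s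

lemma sum_mulN {κ : Type*} (s : Finset κ) (f : κ → NSymA A) (g : NSymA A) :
    mulN (∑ k ∈ s, f k) g = ∑ k ∈ s, mulN (f k) g :=
  map_sum (mulNₗ.flip g) f s

lemma mulN_assoc (f g h : NSymA A) : mulN (mulN f g) h = mulN f (mulN g h) := by
  funext I
  calc mulN (mulN f g) h I
      = ∑ j ∈ Finset.range (I.length + 1), ∑ i ∈ Finset.range (j + 1),
          f (I.take i) * g ((I.take j).drop i) * h (I.drop j) := by
        refine Finset.sum_congr rfl fun j hj ↦ ?_
        have hj : j ≤ I.length := Finset.mem_range_succ_iff.1 hj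
        rw [mulN, Finset.sum_mul, List.length_take_of_le hj]
        refine Finset.sum_congr rfl fun i hi ↦ ?_
        rw [List.take_take, min_eq_left (Finset.mem_range_succ_iff.1 hi)]
    _ = mulN f (mulN g h) I := by
        rw [sum_range_sum_range_comm]
        refine Finset.sum_congr rfl fun i _ ↦ ?_
        simp only [mulN, Finset.mul_sum, List.length_drop, List.drop_drop, List.drop_take,
          Nat.add_sub_cancel_left, mul_assoc]

lemma mulN_Hd_Hd (I J : Sentence A) : mulN (Hd I) (Hd J) = Hd (I ++ J) := by
  classical
  funext K
  simp only [mulN, Hd, ite_mul, one_mul, zero_mul, ← ite_and]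
  by_cases hK : K = I ++ J
  · subst hK
    rw [if_pos rfl, Finset.sum_eq_single I.length]
    · simp
    · rintro j hj hne
      refine if_neg fun h ↦ hne ?_
      rw [← h.1, List.length_take_of_le (Finset.mem_range_succ_iff.1 hj)]
    · simp
  · rw [if_neg hK]
    refine Finset.sum_eq_zero fun j _ ↦ if_neg fun h ↦ hK ?_
    rw [← h.1, ← h.2, List.take_append_drop]

/-- The sentence `(x)` formed by a single word, or the empty sentence if `x = ∅`;
thus `H_x` is `Hd (ofWord x)` for every word `x`. -/
def ofWord (x : List A) : Sentence A := flattenWS [x]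

lemma ofWord_nil : ofWord ([] : List A) = [] := rfl

lemma ofWord_of_ne_nil {x : List A} (hx : x ≠ []) : ofWord x = [x] := by
  simp [ofWord, flattenWS, hx]

lemma Hw_eq_Hd (x : List A) : Hw x = Hd (ofWord x) := by
  by_cases hx : x = [] <;> simp [Hw, hx, ofWord_nil, ofWord_of_ne_nil]

lemma flattenWS_append (I J : Sentence A) : flattenWS (I ++ J) = flattenWS I ++ flattenWS J :=
  List.filter_append ..

lemma isSentence_flattenWS (I : Sentence A) : IsSentence (flattenWS I) := fun w hw ↦ by
  simpa using List.of_mem_filter hw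

lemma isSentence_ofWord (x : List A) : IsSentence (ofWord x) := isSentence_flattenWS [x]

lemma isSentence_append {I J : Sentence A} :
    IsSentence (I ++ J) ↔ IsSentence I ∧ IsSentence J :=
  List.forall_mem_append

lemma isSentence_singleton {x : List A} : IsSentence [x] ↔ x ≠ [] := by
  simp [IsSentence]

lemma IsSentence.flatten_eq_nil {I : Sentence A} (hI : IsSentence I) : I.flatten = [] ↔ I = [] := by
  rw [List.flatten_eq_nil_iff, List.eq_nil_iff_forall_not_mem]
  exact forall₂_congr fun w hw ↦ iff_false_intro (hI w hw)

lemma coe_single_eq_smul_Hd (K : Sentence A) (c : ℚ) : ⇑(Finsupp.single K c) = c • Hd K := by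
  classical
  funext J
  simp [Hd, Finsupp.single_apply, eq_comm]

lemma mulN_coe_Hd (g : Sentence A →₀ ℚ) (J : Sentence A) :
    mulN g (Hd J) = g.mapDomain (· ++ J) := by
  induction g using Finsupp.induction_linear with
  | zero => exact zero_mulN (Hd J)
  | add g₁ g₂ h₁ h₂ => rw [Finsupp.coe_add, mulN_add_left, h₁, h₂, Finsupp.mapDomain_add,
      Finsupp.coe_add]
  | single K c => rw [Finsupp.mapDomain_single, coe_single_eq_smul_Hd, coe_single_eq_smul_Hd,
      mulN_smul_left, mulN_Hd_Hd]

lemma InNSym.mapDomain_append {g : Sentence A →₀ ℚ} (hg : InNSym g) {J : Sentence A}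
    (hJ : IsSentence J) : InNSym (g.mapDomain (· ++ J)) := by
  classical
  refine ⟨Finsupp.hasFiniteSupport _, fun K hK ↦ ?_⟩
  obtain ⟨K', hK', rfl⟩ :=
    Finset.mem_image.1 (Finsupp.mapDomain_support (Finsupp.mem_support_iff.2 hK))
  exact isSentence_append.2 ⟨hg.2 K' (Finsupp.mem_support_iff.1 hK'), hJ⟩

end Product

section Refinements

variable {A : Type*}

/-- The genuine sentences `Q ⪯ T`, the index set of the signed sums defining `𝔹_v`. -/
def refinements (T : Sentence A) : Set (Sentence A) := {Q | IsSentence Q ∧ Refines Q T}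

lemma Refines.flatten_eq {Q T : Sentence A} (h : Refines Q T) : Q.flatten = T.flatten := by
  obtain ⟨P, -, rfl, rfl⟩ := h
  exact List.flatten_flatten

lemma finite_refinements (T : Sentence A) : (refinements T).Finite := by
  refine (Set.finite_range fun c : Composition T.flatten.length ↦
    T.flatten.splitWrtComposition c).subset ?_
  rintro Q ⟨hQ, hQT⟩
  rw [← hQT.flatten_eq]
  refine ⟨⟨Q.map List.length, fun {i} hi ↦ ?_, List.length_flatten.symm⟩,
    List.splitWrtComposition_flatten _ _ rfl⟩
  obtain ⟨w, hw, rfl⟩ := List.mem_map.1 hi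
  exact List.length_pos_iff.2 (hQ w hw)

lemma refines_append_singleton {Q T : Sentence A} {y : List A} :
    Refines Q (T ++ [y]) ↔ ∃ Q₀ p, p ≠ [] ∧ Q₀ ++ p = Q ∧ p.flatten = y ∧ Refines Q₀ T := by
  constructor
  · rintro ⟨P, hP, rfl, h⟩
    obtain ⟨P₀, P₁, rfl, hP₀, hP₁⟩ := List.map_eq_append_iff.1 h
    obtain ⟨p, rfl, hp⟩ := List.map_eq_singleton_iff.1 hP₁
    exact ⟨P₀.flatten, p, hP p (by simp), by simp, hp,
      P₀, fun q hq ↦ hP q (List.mem_append_left _ hq), rfl, hP₀⟩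
  · rintro ⟨_, p, hp, rfl, rfl, P, hP, rfl, rfl⟩
    exact ⟨P ++ [p], List.forall_mem_append.2 ⟨hP, by simpa using hp⟩, by simp, by simp⟩

lemma append_singleton_refines_append_singleton {Q T : Sentence A} (hQ : IsSentence Q)
    {y z : List A} :
    Refines (Q ++ [z]) (T ++ [y]) ↔ ∃ x, x ++ z = y ∧ Refines Q (T ++ ofWord x) := by
  rw [refines_append_singleton]
  constructor
  · rintro ⟨Q₀, p, hp, hQp, rfl, hQ₀⟩
    obtain ⟨p, z', rfl⟩ := List.eq_nil_or_concat' p |>.resolve_left hp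
    rw [← List.append_assoc] at hQp
    obtain ⟨rfl, hz⟩ := List.append_inj' hQp rfl
    obtain rfl := List.singleton_injective hz
    refine ⟨p.flatten, by simp, ?_⟩
    have hp : IsSentence p := (isSentence_append.1 hQ).2
    by_cases hp_nil : p = []
    · simpa [hp_nil, ofWord_nil] using hQ₀
    · rw [ofWord_of_ne_nil (hp.flatten_eq_nil.not.2 hp_nil), refines_append_singleton]
      exact ⟨Q₀, p, hp_nil, rfl, rfl, hQ₀⟩
  · rintro ⟨x, rfl, hQx⟩
    by_cases hx : x = []
    · subst hx
      exact ⟨Q, [z], by simp, rfl, by simp, by simpa [ofWord_nil] using hQx⟩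
    · rw [ofWord_of_ne_nil hx, refines_append_singleton] at hQx
      obtain ⟨Q₀, p, -, rfl, rfl, hQ₀⟩ := hQx
      exact ⟨Q₀, p ++ [z], by simp, by simp, by simp, hQ₀⟩

lemma refinements_append_singleton (T : Sentence A) {y : List A} :
    refinements (T ++ [y]) = ⋃ j ∈ Finset.range y.length,
      (· ++ [y.drop j]) '' refinements (T ++ ofWord (y.take j)) := by
  ext Q
  simp only [Set.mem_iUnion, Finset.mem_range, Set.mem_image, exists_prop]
  constructor
  · rintro ⟨hQ, hQT⟩
    obtain ⟨Q₀, p, hp, rfl, -⟩ := refines_append_singleton.1 hQT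
    obtain ⟨p, z, rfl⟩ := List.eq_nil_or_concat' p |>.resolve_left hp
    rw [← List.append_assoc] at hQ hQT ⊢
    obtain ⟨hQ', hz⟩ := isSentence_append.1 hQ
    obtain ⟨x, rfl, hQx⟩ := (append_singleton_refines_append_singleton hQ').1 hQT
    have hz : 0 < z.length := List.length_pos_iff.2 (isSentence_singleton.1 hz)
    exact ⟨x.length, by simpa using hz, Q₀ ++ p, ⟨hQ', by simpa using hQx⟩, by simp⟩
  · rintro ⟨j, hj, Q', ⟨hQ', hQT⟩, rfl⟩
    refine ⟨isSentence_append.2 ⟨hQ', isSentence_singleton.2 ?_⟩,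
      (append_singleton_refines_append_singleton hQ').2 ⟨_, List.take_append_drop j y, hQT⟩⟩
    exact List.drop_eq_nil_iff.not.2 hj.not_ge

lemma finsum_mem_refinements_append_singleton {M : Type*} [AddCommMonoid M] (T : Sentence A)
    (y : List A) (F : Sentence A → M) :
    ∑ᶠ Q ∈ refinements (T ++ [y]), F Q = ∑ j ∈ Finset.range y.length,
      ∑ᶠ Q ∈ refinements (T ++ ofWord (y.take j)), F (Q ++ [y.drop j]) := by
  have hdisj : (Finset.range y.length : Set ℕ).PairwiseDisjoint fun j ↦
      (· ++ [y.drop j]) '' refinements (T ++ ofWord (y.take j)) := by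
    intro i hi j hj hij
    refine Set.disjoint_left.2 ?_
    rintro _ ⟨Q, -, rfl⟩ ⟨Q', -, hQQ'⟩
    have hdrop : y.drop j = y.drop i := List.singleton_injective (List.append_inj' hQQ' rfl).2
    have hlen := congrArg List.length hdrop
    simp only [Finset.coe_range, Set.mem_Iio, List.length_drop] at hi hj hlen
    lia
  rw [refinements_append_singleton, ← Finset.set_biUnion_coe,
    finsum_mem_biUnion hdisj (Finset.finite_toSet _) fun j _ ↦ (finite_refinements _).image _,
    finsum_mem_coe_finset]
  exact Finset.sum_congr rfl fun j _ ↦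
    finsum_mem_image (List.append_left_injective _).injOn

/-- The factor `Σ_{Q ⪯ T} (-1)^{ℓ(Q)} H_{v·w(Q^r)}` with which `H_I` is multiplied in `𝔹_v`,
for each term `H_I ⊗ H_T` of `Δ f`. -/
noncomputable def signedRefinementSum (v : List A) (T : Sentence A) : NSymA A :=
  ∑ᶠ Q ∈ refinements T, (-1 : ℚ) ^ Q.length • Hw (v ++ Q.reverse.flatten)

lemma signedRefinementSum_append_singleton (v : List A) (T : Sentence A) (y : List A) :
    signedRefinementSum v (T ++ [y]) = -∑ j ∈ Finset.range y.length,
      signedRefinementSum (v ++ y.drop j) (T ++ ofWord (y.take j)) := by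
  rw [signedRefinementSum, finsum_mem_refinements_append_singleton, ← Finset.sum_neg_distrib]
  refine Finset.sum_congr rfl fun j _ ↦ ?_
  rw [signedRefinementSum, ← finsum_mem_neg_distrib _ (finite_refinements _)]
  refine finsum_mem_congr rfl fun Q _ ↦ ?_
  simp [pow_succ]

lemma sum_signedRefinementSum_eq_zero (v : List A) (T : Sentence A) {y : List A} (hy : y ≠ []) :
    ∑ j ∈ Finset.range (y.length + 1),
      signedRefinementSum (v ++ y.drop j) (T ++ ofWord (y.take j)) = 0 := by
  rw [Finset.sum_range_succ, List.take_length, List.drop_length, List.append_nil,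
    ofWord_of_ne_nil hy, signedRefinementSum_append_singleton, add_neg_cancel]

end Refinements

section Coproduct

variable {A : Type*}

lemma length_eq_of_mem_splitsOf {K : Sentence A} {p : Sentence A × Sentence A}
    (hp : p ∈ splitsOf K) : p.1.length = K.length ∧ p.2.length = K.length := by
  induction K generalizing p with
  | nil => simp_all [splitsOf]
  | cons w K ih =>
    simp only [splitsOf, List.mem_flatten, List.mem_map] at hp
    obtain ⟨_, ⟨q, hq, rfl⟩, hp⟩ := hp
    obtain ⟨t, -, rfl⟩ := List.mem_map.1 hp
    simp [ih hq]

lemma sum_map_splitsOf_cons {M : Type*} [AddCommMonoid M] (w : List A) (K : Sentence A)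
    (F : Sentence A × Sentence A → M) :
    ((splitsOf (w :: K)).map F).sum = ((splitsOf K).map fun p ↦
      ∑ t ∈ Finset.range (w.length + 1), F (w.take t :: p.1, w.drop t :: p.2)).sum := by
  simp only [splitsOf, List.map_flatten, List.sum_flatten, List.map_map]
  refine congrArg List.sum (List.map_congr_left fun p _ ↦ ?_)
  rw [Finset.sum_eq_multiset_sum, Function.comp_apply, Function.comp_apply, List.map_map]
  rfl

lemma sum_map_splitsOf_append_singleton {M : Type*} [AddCommMonoid M] (K : Sentence A)
    (x : List A) (F : Sentence A × Sentence A → M) :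
    ((splitsOf (K ++ [x])).map F).sum = ((splitsOf K).map fun p ↦
      ∑ t ∈ Finset.range (x.length + 1), F (p.1 ++ [x.take t], p.2 ++ [x.drop t])).sum := by
  induction K generalizing F with
  | nil => rw [List.nil_append, sum_map_splitsOf_cons]; simp [splitsOf]
  | cons w K ih =>
    rw [List.cons_append, sum_map_splitsOf_cons, ih, sum_map_splitsOf_cons]
    simp only [Finset.sum_comm (s := Finset.range (w.length + 1)), List.cons_append]

/-- The coproduct `Δ H_K = Σ H_I ⊗ H_S` of `NSym_A`, summed over all ways of cutting every word
of `K` into a prefix and a suffix. The tensor `H_I ⊗ H_S` is encoded as the pair `(I, S)`, and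
empty words are discarded. -/
noncomputable def coproduct : (Sentence A →₀ ℚ) →ₗ[ℚ] (Sentence A × Sentence A →₀ ℚ) :=
  Finsupp.linearCombination ℚ fun K ↦
    ((splitsOf K).map fun p ↦ Finsupp.single (flattenWS p.1, flattenWS p.2) 1).sum

lemma coproduct_single (K : Sentence A) (c : ℚ) :
    coproduct (Finsupp.single K c) =
      c • ((splitsOf K).map fun p ↦ Finsupp.single (flattenWS p.1, flattenWS p.2) (1 : ℚ)).sum :=
  Finsupp.linearCombination_single ..

lemma coproduct_single_append_ofWord (K : Sentence A) (x : List A) :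
    coproduct (Finsupp.single (K ++ ofWord x) 1) = ∑ t ∈ Finset.range (x.length + 1),
      (coproduct (Finsupp.single K 1)).mapDomain fun p ↦
        (p.1 ++ ofWord (x.take t), p.2 ++ ofWord (x.drop t)) := by
  by_cases hx : x = []
  · simp only [hx, ofWord_nil, List.append_nil, List.length_nil, zero_add, Finset.sum_range_one,
      List.take_nil, List.drop_nil]
    exact Finsupp.mapDomain_id.symm
  rw [ofWord_of_ne_nil hx, coproduct_single, sum_map_splitsOf_append_singleton,
    coproduct_single, one_smul, one_smul]
  refine (Multiset.sum_map_sum_map (Multiset.ofList (splitsOf K)) (Finset.range _).1).trans ?_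
  refine Finset.sum_congr rfl fun t _ ↦ ?_
  rw [← Finsupp.lmapDomain_apply ℚ ℚ, map_list_sum, List.map_map]
  refine congrArg List.sum (List.map_congr_left fun p _ ↦ ?_)
  simp [flattenWS_append, ofWord]

lemma coproduct_mapDomain_append_ofWord (g : Sentence A →₀ ℚ) (x : List A) :
    coproduct (g.mapDomain (· ++ ofWord x)) = ∑ t ∈ Finset.range (x.length + 1),
      (coproduct g).mapDomain fun p ↦
        (p.1 ++ ofWord (x.take t), p.2 ++ ofWord (x.drop t)) := by
  induction g using Finsupp.induction_linear with
  | zero => simp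
  | add g₁ g₂ h₁ h₂ => simp only [Finsupp.mapDomain_add, map_add, h₁, h₂, Finset.sum_add_distrib]
  | single K c =>
    rw [Finsupp.mapDomain_single, ← Finsupp.smul_single_one K, ← Finsupp.smul_single_one (_ ++ _),
      map_smul, map_smul, coproduct_single_append_ofWord, Finset.smul_sum]
    simp only [Finsupp.mapDomain_smul]

end Coproduct

section Duality

variable {A : Type*}

lemma restrictMono_fst {ws : Sentence A} {js : List ℕ} (h : ws.length = js.length) :
    (restrictMono ws js).1 = flattenWS ws := by
  conv_rhs => rw [flattenWS, ← List.map_fst_zip h.le, List.filter_map]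
  rfl

lemma validMono_restrictMono {ws : Sentence A} {js : List ℕ} (h : ws.length = js.length)
    (hlt : js.Pairwise (· < ·)) (hpos : ∀ j ∈ js, 1 ≤ j) : ValidMono (restrictMono ws js) := by
  have hsub : (restrictMono ws js).2.Sublist js := by
    conv_rhs => rw [← List.map_snd_zip h.ge]
    exact List.filter_sublist.map _
  refine ⟨by simp [restrictMono], (hlt.sublist hsub).isChain,
    fun j hj ↦ hpos j (hsub.subset hj), ?_⟩
  rw [restrictMono_fst h]
  exact isSentence_flattenWS ws

open Classical in
lemma MQ_restrictMono_range' (I : Sentence A) {ws : Sentence A} {n : ℕ} (h : ws.length = n) :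
    MQ I (restrictMono ws (List.range' 1 n)) = if flattenWS ws = I then 1 else 0 := by
  have hlen : ws.length = (List.range' 1 n).length := by rwa [List.length_range']
  have hvalid := validMono_restrictMono hlen List.pairwise_lt_range'
    fun _ ↦ List.left_le_of_mem_range'
  simp only [MQ, restrictMono_fst hlen, hvalid, and_true]

lemma MQ_eq_zero {I : Sentence A} (hI : ¬ IsSentence I) : MQ I = 0 :=
  funext fun _ ↦ if_neg fun ⟨hm, hvalid⟩ ↦ hI (hm ▸ hvalid.2.2.2)

lemma pairNQ_coe {g : Sentence A →₀ ℚ} (hg : InNSym g) (F : QSymA A) :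
    pairNQ g F = g.sum fun K c ↦ c * F (K, List.range' 1 K.length) :=
  finsum_mem_eq_sum_of_subset _
    (fun _ hK ↦ Finsupp.mem_support_iff.2 (left_ne_zero_of_mul hK.2))
    fun K hK ↦ hg.2 K (Finsupp.mem_support_iff.1 hK)

lemma coproduct_single_apply (K I S : Sentence A) :
    coproduct (Finsupp.single K 1) (I, S) = mulQ (MQ I) (MQ S) (K, List.range' 1 K.length) := by
  classical
  rw [coproduct_single, one_smul, ← Finsupp.lapply_apply (R := ℚ), map_list_sum, List.map_map,
    mulQ]
  congr 1
  refine List.map_congr_left fun p hp ↦ ?_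
  obtain ⟨h₁, h₂⟩ := length_eq_of_mem_splitsOf hp
  simp only [Function.comp_apply, Finsupp.lapply_apply, Finsupp.single_apply, Prod.mk.injEq,
    MQ_restrictMono_range' _ h₁, MQ_restrictMono_range' _ h₂, ite_and, ite_mul, one_mul, zero_mul]

lemma pairNQ_mulQ_MQ {g : Sentence A →₀ ℚ} (hg : InNSym g) (I S : Sentence A) :
    pairNQ g (mulQ (MQ I) (MQ S)) = coproduct g (I, S) := by
  simp only [pairNQ_coe hg, ← coproduct_single_apply]
  conv_rhs => rw [← g.sum_single, map_finsuppSum, Finsupp.sum_apply]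
  refine Finsupp.sum_congr fun K _ ↦ ?_
  rw [← Finsupp.smul_single_one K (g K), map_smul, Finsupp.smul_apply, smul_eq_mul]

lemma rperp_eq_finsum (M : QSymA A) (f : NSymA A) :
    rperp M f = ∑ᶠ I, pairNQ f (mulQ (MQ I) M) • Hd I := by
  refine finsum_congr fun I ↦ ?_
  by_cases hI : IsSentence I
  · simp only [hI, Set.mem_ofPred_eq, finsum_true]
  · simp [MQ_eq_zero hI, pairNQ, mulQ]

open Classical in
lemma rperp_MQ {g : Sentence A →₀ ℚ} (hg : InNSym g) (S : Sentence A) :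
    rperp (MQ S) g = (coproduct g).sum fun p c ↦ if S = p.2 then c • Hd p.1 else 0 := by
  calc rperp (MQ S) g
      = ∑ᶠ I, ∑ p ∈ (coproduct g).support, if I ∈ ({p.1} : Set (Sentence A)) then
          (if S = p.2 then coproduct g p • Hd I else 0) else 0 := by
        rw [rperp_eq_finsum]
        refine finsum_congr fun I ↦ ?_
        rw [pairNQ_mulQ_MQ hg, Finset.sum_eq_single (I, S)]
        · simp
        · rintro ⟨I', S'⟩ - hne
          simp only [Set.mem_singleton_iff, ← ite_and]
          exact if_neg fun h ↦ hne (by rw [h.1, h.2])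
        · simp +contextual
    _ = (coproduct g).sum fun p c ↦ if S = p.2 then c • Hd p.1 else 0 := by
        rw [finsum_sum_ite_mem _ fun _ _ ↦ Set.finite_singleton _]
        simp only [finsum_mem_singleton, Finsupp.sum]

open Classical in
lemma finsum_rperp_MQ {g : Sentence A →₀ ℚ} (hg : InNSym g) (Q : Sentence A) :
    ∑ᶠ (S) (_ : Refines Q S), rperp (MQ S) g =
      (coproduct g).sum fun p c ↦ if Refines Q p.2 then c • Hd p.1 else 0 := by
  calc ∑ᶠ (S) (_ : Refines Q S), rperp (MQ S) g
      = ∑ᶠ S, ∑ p ∈ (coproduct g).support, if S ∈ ({p.2} : Set (Sentence A)) then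
          (if Refines Q S then coproduct g p • Hd p.1 else 0) else 0 := by
        refine finsum_congr fun S ↦ ?_
        by_cases hQS : Refines Q S <;> simp [hQS, rperp_MQ hg, Finsupp.sum]
    _ = (coproduct g).sum fun p c ↦ if Refines Q p.2 then c • Hd p.1 else 0 := by
        rw [finsum_sum_ite_mem _ fun _ _ ↦ Set.finite_singleton _]
        simp only [finsum_mem_singleton, Finsupp.sum]

lemma Bern_eq_linearCombination (v : List A) {g : Sentence A →₀ ℚ} (hg : InNSym g) :
    Bern v g = Finsupp.linearCombination ℚ
      (fun p ↦ mulN (signedRefinementSum v p.2) (Hd p.1)) (coproduct g) := by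
  classical
  rw [Finsupp.linearCombination_apply]
  calc Bern v g
      = ∑ᶠ Q, ∑ p ∈ (coproduct g).support, if Q ∈ refinements p.2 then
          coproduct g p • mulN ((-1 : ℚ) ^ Q.length • Hw (v ++ Q.reverse.flatten)) (Hd p.1)
          else 0 := by
        refine finsum_congr fun Q ↦ ?_
        by_cases hQ : IsSentence Q
        · simp only [refinements, Set.mem_ofPred_eq, hQ, finsum_true, true_and]
          rw [finsum_rperp_MQ hg, ← mulN_smul_left, Finsupp.sum, mulN_sum]
          refine Finset.sum_congr rfl fun p _ ↦ ?_
          split_ifs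
          · rw [mulN_smul_right]
          · rw [mulN_zero]
        · simp [refinements, hQ]
    _ = (coproduct g).sum fun p c ↦ c • mulN (signedRefinementSum v p.2) (Hd p.1) := by
        rw [finsum_sum_ite_mem _ fun p _ ↦ finite_refinements p.2]
        refine Finset.sum_congr rfl fun p _ ↦ ?_
        exact ((coproduct g p • mulNₗ.flip (Hd p.1)).toAddMonoidHom.map_finsum_mem _
          (finite_refinements p.2)).symm

end Duality

section Pieri

variable {A : Type*}

lemma sum_signedRefinementSum_mulN_Hd (v w : List A) (I S : Sentence A) :
    ∑ j ∈ Finset.range (w.length + 1), ∑ t ∈ Finset.range (j + 1),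
      mulN (signedRefinementSum (v ++ w.drop j) (S ++ ofWord ((w.take j).drop t)))
        (Hd (I ++ ofWord (w.take t))) =
      mulN (signedRefinementSum v S) (Hd (I ++ ofWord w)) := by
  rw [sum_range_sum_range_comm w.length fun j t ↦
    mulN (signedRefinementSum (v ++ w.drop j) (S ++ ofWord ((w.take j).drop t)))
      (Hd (I ++ ofWord (w.take t))), Finset.sum_range_succ, Finset.sum_eq_zero, zero_add]
  · simp [ofWord_nil]
  · intro t ht
    have hy : w.drop t ≠ [] := List.drop_eq_nil_iff.not.2 (Finset.mem_range.1 ht).not_ge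
    rw [← sum_mulN]
    simp only [List.drop_take, Nat.add_sub_cancel_left, ← List.drop_drop, ← List.length_drop,
      sum_signedRefinementSum_eq_zero _ _ hy, zero_mulN]

lemma Bern_mulN_Hw (v x : List A) {g : Sentence A →₀ ℚ} (hg : InNSym g) :
    Bern v (mulN g (Hw x)) = Finsupp.linearCombination ℚ
      (fun p ↦ ∑ t ∈ Finset.range (x.length + 1),
        mulN (signedRefinementSum v (p.2 ++ ofWord (x.drop t))) (Hd (p.1 ++ ofWord (x.take t))))
      (coproduct g) := by
  rw [Hw_eq_Hd, mulN_coe_Hd,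
    Bern_eq_linearCombination v (hg.mapDomain_append (isSentence_ofWord x)),
    coproduct_mapDomain_append_ofWord, map_sum]
  simp only [Finsupp.linearCombination_mapDomain, Function.comp_def]
  simp only [Finsupp.linearCombination_apply, Finsupp.sum, Finset.smul_sum]
  exact Finset.sum_comm

end Pieri

/-- For words `v` and `w = a_1…a_k` and `f ∈ NSym_A`,
`𝔹_v(f)·H_w = Σ_{0 ≤ j ≤ k} 𝔹_{v·(a_{j+1}⋯a_k)}(f·H_{a_1⋯a_j})`. -/
theorem statement11 {A : Type*} (v w : List A) (f : NSymA A) (hf : InNSym f) :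
    mulN (Bern v f) (Hw w) =
      ∑ j ∈ Finset.range (w.length + 1),
        Bern (v ++ w.drop j) (mulN f (Hw (w.take j))) := by
  lift f to Sentence A →₀ ℚ using hf.1
  calc mulN (Bern v f) (Hw w)
      = (coproduct f).sum fun p c ↦
          c • mulN (signedRefinementSum v p.2) (Hd (p.1 ++ ofWord w)) := by
        rw [Bern_eq_linearCombination v hf, Finsupp.linearCombination_apply, Finsupp.sum, sum_mulN]
        simp only [mulN_smul_left, mulN_assoc, Hw_eq_Hd, mulN_Hd_Hd, Finsupp.sum]
    _ = ∑ j ∈ Finset.range (w.length + 1), (coproduct f).sum fun p c ↦ c •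
          ∑ t ∈ Finset.range (j + 1),
            mulN (signedRefinementSum (v ++ w.drop j) (p.2 ++ ofWord ((w.take j).drop t)))
              (Hd (p.1 ++ ofWord (w.take t))) := by
        simp only [Finsupp.sum]
        rw [Finset.sum_comm]
        refine Finset.sum_congr rfl fun p _ ↦ ?_
        rw [← Finset.smul_sum, sum_signedRefinementSum_mulN_Hd]
    _ = ∑ j ∈ Finset.range (w.length + 1), Bern (v ++ w.drop j) (mulN f (Hw (w.take j))) := by
        refine Finset.sum_congr rfl fun j hj ↦ ?_
        rw [Bern_mulN_Hw _ _ hf, Finsupp.linearCombination_apply,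
          List.length_take_of_le (Finset.mem_range_succ_iff.1 hj)]
        refine Finset.sum_congr rfl fun p _ ↦ congrArg _ (Finset.sum_congr rfl fun t ht ↦ ?_)
        rw [List.take_take, min_eq_left (Finset.mem_range_succ_iff.1 ht)]

end ColoredImm
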